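/- In the line model with M layers, for every n ≥ 1, every x^{(n)} = (x_1,…,x_n) ∈ {0,1}^n and every m ∈ {0,1,…,M}: Q_{x^{(n)}}(m) = Σ_{j=0}^{n} h_j Q_{0^{(n−j)}}(m) ∏_{l=j+1}^{n} ((1−x_l) − x_l), with the conventions Q_{0^{(0)}}(m) = 1 and that empty products equal 1. -/

import Mathlib

open MeasureTheory ProbabilityTheory Finset

/-- Bernoulli measure on `Bool` with success probability `p`. -/
noncomputable def bern (p : ℝ) : Measure Bool :=
  ENNReal.ofReal p • Measure.dirac true + ENNReal.ofReal (1 - p) • Measure.dirac false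

/-- The line model with `M` layers, `n` links (hence `n+1` nodes), node activation
probability `q`: every node is active on every layer independently with probability `q`. -/
noncomputable def lineμ (M n : ℕ) (q : ℝ) : Measure ((Fin M × Fin (n + 1)) → Bool) :=
  Measure.pi fun _ => bern q

/-- Link `e_{j+1} = (j+1, j+2)` (1-based) is active: some layer has both endpoints active. -/
def act {M n : ℕ} (j : Fin n) (ω : (Fin M × Fin (n + 1)) → Bool) : Prop :=
  ∃ m : Fin M, ω (m, j.castSucc) = true ∧ ω (m, j.succ) = true

/-- The event that the links are in configuration `x` (1-based: link `e_j` is active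
iff `x j = 1`). -/
def cfg {M n : ℕ} (x : ℕ → ℝ) : Set ((Fin M × Fin (n + 1)) → Bool) :=
  {ω | ∀ j : Fin n, (act j ω ↔ x (j.val + 1) = 1)}

/-- The event that the set of layers on which the last node `n+1` is active equals `A`. -/
def lastIn {M n : ℕ} (A : Finset (Fin M)) : Set ((Fin M × Fin (n + 1)) → Bool) :=
  {ω | ∀ k : Fin M, (ω (k, Fin.last n) = true ↔ k ∈ A)}

/-- `Q_{x^{(n)}}(m)`: conditional probability of configuration `x` given that the set of
layers on which node `n+1` is active equals the fixed set `A` (of cardinality `m`). -/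
noncomputable def Qcond (M n : ℕ) (q : ℝ) (x : ℕ → ℝ) (A : Finset (Fin M)) : ℝ :=
  (ProbabilityTheory.cond (lineμ M n q) (lastIn A) (cfg x)).toReal

/-- The polynomials `P_k(q)`: `P₁ = P₂ = 0`,
`P_k = (1−q) P_{k−1} + q(1−q) P_{k−2} + q³ + (k−3) q⁴` for `k ≥ 3`. -/
noncomputable def Ppoly (q : ℝ) : ℕ → ℝ
  | 0 => 0
  | 1 => 0
  | 2 => 0
  | (k + 3) => (1 - q) * Ppoly q (k + 2) + q * (1 - q) * Ppoly q (k + 1) + q ^ 3 + (k : ℝ) * q ^ 4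

/-- The coefficients `h_j`: `h₀ = 1`, `h₁ = x₁`, and for `j ≥ 2`,
`h_j = x_j ∑_{r=0}^{j−1} [1−(j−1−r)q² + P_{j−r}(q)]^M h_r ∏_{l=r+1}^{j−1} ((1−x_l) − x_l)`. -/
noncomputable def hcoef (M : ℕ) (q : ℝ) (x : ℕ → ℝ) : ℕ → ℝ
  | 0 => 1
  | 1 => x 1
  | (j + 2) => x (j + 2) *
      ∑ r ∈ (Finset.range (j + 2)).attach,
        (1 - ((j : ℝ) + 1 - (r.1 : ℝ)) * q ^ 2 + Ppoly q (j + 2 - r.1)) ^ M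
          * hcoef M q x r.1
          * ∏ l ∈ Finset.Icc (r.1 + 1) (j + 1), ((1 - x l) - x l)
  termination_by j => j
  decreasing_by
    have := Finset.mem_range.mp r.2
    omega

/-- `Q_{0^{(k)}}(m)` with the convention `Q_{0^{(0)}}(·) = 1`. -/
noncomputable def Q0c (M : ℕ) (q : ℝ) (A : Finset (Fin M)) : ℕ → ℝ
  | 0 => 1
  | (k + 1) => Qcond M (k + 1) q (fun _ => 0) A

/-- The real weight of a value of a Bernoulli variable with success probability `q`. -/
def bernWeight (q : ℝ) (b : Bool) : ℝ := if b then q else 1 - q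

/-- The probability that a node is active exactly on the layers selected by `s`. -/
def nodeWeight {M : ℕ} (q : ℝ) (s : Fin M → Bool) : ℝ := ∏ k, bernWeight q (s k)

/-- The expected product of kernels `K 0, …, K (n-1)` along a chain of `n + 1` independent
states with weights `w`, given the last state. -/
def chainWeight {S : Type*} [Fintype S] (w : S → ℝ) (K : ℕ → S → S → ℝ) : ℕ → S → ℝ
  | 0, _ => 1
  | n + 1, s => ∑ t, w t * K n t s * chainWeight w K n t

open Classical in
/-- The indicator that the link between nodes with states `t` and `s` is active iff
`x (j + 1) = 1`. -/
noncomputable def linkKernel {M : ℕ} (x : ℕ → ℝ) (j : ℕ) (t s : Fin M → Bool) : ℝ :=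
  if ((∃ k, t k = true ∧ s k = true) ↔ x (j + 1) = 1) then 1 else 0

instance isFiniteMeasure_bern (q : ℝ) : IsFiniteMeasure (bern q) :=
  ⟨by simp [bern, ENNReal.add_lt_top]⟩

lemma bern_singleton {q : ℝ} (h0 : 0 ≤ q) (h1 : q ≤ 1) (b : Bool) :
    (bern q {b}).toReal = bernWeight q b := by
  cases b <;> simp [bern, bernWeight, h0, h1]

lemma sum_nodeWeight (M : ℕ) (q : ℝ) : ∑ s : Fin M → Bool, nodeWeight q s = 1 := by
  have h := Finset.prod_univ_sum (fun _ : Fin M => (univ : Finset Bool))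
    (fun _ b => bernWeight q b)
  simp only [Fintype.piFinset_univ] at h
  simp only [nodeWeight, ← h]
  simp [bernWeight]

lemma nodeWeight_pos {M : ℕ} {q : ℝ} (h0 : 0 < q) (h1 : q < 1) (s : Fin M → Bool) :
    0 < nodeWeight q s := by
  refine Finset.prod_pos fun k _ => ?_
  unfold bernWeight
  split_ifs <;> linarith

open Classical in
lemma lineμ_toReal {M n : ℕ} {q : ℝ} (h0 : 0 ≤ q) (h1 : q ≤ 1)
    (E : Set ((Fin M × Fin (n + 1)) → Bool)) :
    (lineμ M n q E).toReal = ∑ ω, if ω ∈ E then ∏ p, bernWeight q (ω p) else 0 := by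
  have : IsFiniteMeasure (lineμ M n q) := by unfold lineμ; infer_instance
  rw [← Finset.sum_filter]
  have h := sum_measureReal_singleton (μ := lineμ M n q) (univ.filter (· ∈ E))
  simp only [Finset.coe_filter, Finset.mem_univ, true_and, Set.ofPred_mem_eq] at h
  rw [← Measure.real, ← h]
  refine Finset.sum_congr rfl fun ω _ => ?_
  rw [Measure.real, lineμ, Measure.pi_singleton, ENNReal.toReal_prod]
  exact Finset.prod_congr rfl fun p _ => bern_singleton h0 h1 _

/-- Regroup the activity variables by node. -/
def byNode (M n : ℕ) : ((Fin M × Fin (n + 1)) → Bool) ≃ (Fin (n + 1) → Fin M → Bool) where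
  toFun ω i k := ω (k, i)
  invFun σ p := σ p.2 p.1
  left_inv _ := rfl
  right_inv _ := rfl

lemma prod_bernWeight {M n : ℕ} (q : ℝ) (ω : (Fin M × Fin (n + 1)) → Bool) :
    ∏ p, bernWeight q (ω p) = ∏ i, nodeWeight q (byNode M n ω i) := by
  simp only [nodeWeight, byNode, Equiv.coe_fn_mk]
  rw [Fintype.prod_prod_type, Finset.prod_comm]

lemma sum_chain {S : Type*} [Fintype S] [DecidableEq S] (w : S → ℝ) (K : ℕ → S → S → ℝ)
    (n : ℕ) (s : S) :
    ∑ σ : Fin (n + 1) → S, (if σ (Fin.last n) = s then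
      (∏ j : Fin n, K j (σ j.castSucc) (σ j.succ)) * ∏ i, w (σ i) else 0)
      = w s * chainWeight w K n s := by
  induction n generalizing s with
  | zero =>
    rw [← (Equiv.funUnique (Fin 1) S).symm.sum_comp]
    simp [chainWeight]
  | succ n ih =>
    rw [← (Fin.snocEquiv fun _ : Fin (n + 2) => S).sum_comp, Fintype.sum_prod_type]
    simp only [Fin.snocEquiv, Equiv.coe_fn_mk, Fin.snoc_last]
    rw [Finset.sum_eq_single s (by intro b _ hb; simp [hb]) (by simp)]
    simp only [if_true, Fin.prod_univ_castSucc (n := n + 1), Fin.prod_univ_castSucc (n := n),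
      Fin.snoc_castSucc, Fin.snoc_last, Fin.succ_last, Fin.val_castSucc, Fin.val_last,
      Fin.succ_castSucc, chainWeight]
    have key (t : S) : w t * K n t s * chainWeight w K n t
        = K n t s * ∑ σ : Fin (n + 1) → S, (if σ (Fin.last n) = t then
          (∏ j : Fin n, K j (σ j.castSucc) (σ j.succ)) * ∏ i, w (σ i) else 0) := by
      rw [ih]; ring
    simp only [key, Finset.mul_sum, mul_ite, mul_zero]
    rw [Finset.sum_comm]
    refine Finset.sum_congr rfl fun σ _ => ?_
    rw [Finset.sum_ite_eq, if_pos (Finset.mem_univ _), Fin.prod_univ_castSucc (n := n)]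
    ring

lemma chainWeight_one {S : Type*} [Fintype S] {w : S → ℝ} (hw : ∑ s, w s = 1) (n : ℕ) (s : S) :
    chainWeight w (fun _ _ _ => 1) n s = 1 := by
  induction n generalizing s with
  | zero => rfl
  | succ n ih => simp [chainWeight, ih, hw]

lemma mem_lastIn_iff {M n : ℕ} (A : Finset (Fin M)) (ω : (Fin M × Fin (n + 1)) → Bool) :
    ω ∈ lastIn A ↔ byNode M n ω (Fin.last n) = fun k => decide (k ∈ A) := by
  simp only [lastIn, Set.mem_ofPred_eq, funext_iff, byNode, Equiv.coe_fn_mk]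
  refine forall_congr' fun k => ?_
  cases ω (k, Fin.last n) <;> simp

open Classical in
lemma prod_linkKernel {M n : ℕ} (x : ℕ → ℝ) (ω : (Fin M × Fin (n + 1)) → Bool) :
    ∏ j : Fin n, linkKernel x j (byNode M n ω j.castSucc) (byNode M n ω j.succ)
      = if ω ∈ cfg x then 1 else 0 := by
  unfold linkKernel
  rw [Finset.prod_ite_zero]
  simp only [cfg, act, byNode, Equiv.coe_fn_mk, Finset.mem_univ, true_implies,
    Finset.prod_const_one, Set.mem_ofPred_eq]
  congr

lemma Qcond_eq_chainWeight {M n : ℕ} {q : ℝ} (h0 : 0 < q) (h1 : q < 1) (x : ℕ → ℝ)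
    (A : Finset (Fin M)) :
    Qcond M n q x A
      = chainWeight (nodeWeight q) (linkKernel x) n (fun k => decide (k ∈ A)) := by
  classical
  set s : Fin M → Bool := fun k => decide (k ∈ A) with hs
  have hden : (lineμ M n q (lastIn A)).toReal = nodeWeight q s := by
    have h := sum_chain (nodeWeight (M := M) q) (fun _ _ _ => 1) n s
    rw [chainWeight_one (sum_nodeWeight M q), mul_one, ← (byNode M n).sum_comp] at h
    rw [lineμ_toReal h0.le h1.le, ← h]
    refine Finset.sum_congr rfl fun ω _ => ?_
    simp [mem_lastIn_iff, prod_bernWeight, hs]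
  have hnum : (lineμ M n q (lastIn A ∩ cfg x)).toReal
      = nodeWeight q s * chainWeight (nodeWeight q) (linkKernel x) n s := by
    rw [lineμ_toReal h0.le h1.le, ← sum_chain, ← (byNode M n).sum_comp]
    refine Finset.sum_congr rfl fun ω _ => ?_
    rw [prod_linkKernel, Set.mem_inter_iff, mem_lastIn_iff, prod_bernWeight, ← hs]
    by_cases hl : byNode M n ω (Fin.last n) = s <;> by_cases hc : ω ∈ cfg x <;> simp [hl, hc]
  rw [Qcond, cond_apply (Set.toFinite _).measurableSet, ENNReal.toReal_mul, ENNReal.toReal_inv,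
    hden, hnum, inv_mul_cancel_left₀ (nodeWeight_pos h0 h1 s).ne']

/-- The single-layer kernel forbidding two adjacent active nodes. -/
def avoidKernel (_ : ℕ) (c b : Bool) : ℝ := if c && b then 0 else 1

lemma linkKernel_zero {M : ℕ} (j : ℕ) (t s : Fin M → Bool) :
    linkKernel (fun _ => 0) j t s = ∏ k, avoidKernel j (t k) (s k) := by
  classical
  have h (k : Fin M) : avoidKernel j (t k) (s k)
      = if ¬ (t k = true ∧ s k = true) then 1 else 0 := by
    cases t k <;> cases s k <;> simp [avoidKernel]
  simp only [h, Finset.prod_ite_zero]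
  simp [linkKernel]

lemma chainWeight_zero_eq_prod {M : ℕ} (q : ℝ) (n : ℕ) (s : Fin M → Bool) :
    chainWeight (nodeWeight q) (linkKernel fun _ => 0) n s
      = ∏ k, chainWeight (bernWeight q) avoidKernel n (s k) := by
  induction n generalizing s with
  | zero => simp [chainWeight]
  | succ n ih =>
    simp only [chainWeight]
    rw [Finset.prod_univ_sum, Fintype.piFinset_univ]
    refine Finset.sum_congr rfl fun t _ => ?_
    rw [ih, linkKernel_zero, nodeWeight, ← Finset.prod_mul_distrib, ← Finset.prod_mul_distrib]

lemma chainWeight_avoid_rec (q : ℝ) (n : ℕ) :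
    chainWeight (bernWeight q) avoidKernel (n + 2) false
      = (1 - q) * chainWeight (bernWeight q) avoidKernel (n + 1) false
        + q * (1 - q) * chainWeight (bernWeight q) avoidKernel n false := by
  have h : chainWeight (bernWeight q) avoidKernel (n + 1) true
      = (1 - q) * chainWeight (bernWeight q) avoidKernel n false := by
    simp [chainWeight, bernWeight, avoidKernel]
  rw [chainWeight, Fintype.sum_bool, h]
  simp only [bernWeight, avoidKernel]
  simp
  ring

/-- The probability that no two adjacent nodes among `n + 1` are active on a given layer. -/
lemma chainWeight_avoid (q : ℝ) (n : ℕ) :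
    chainWeight (bernWeight q) avoidKernel (n + 1) false
      = 1 - (n : ℝ) * q ^ 2 + Ppoly q (n + 1) := by
  induction n using Nat.twoStepInduction with
  | zero => simp [chainWeight, bernWeight, avoidKernel, Ppoly]
  | one =>
    simp [chainWeight, bernWeight, avoidKernel, Ppoly]
    ring
  | more n ih ih' =>
    rw [chainWeight_avoid_rec, ih, ih', Ppoly]
    push_cast
    ring

lemma sum_chainWeight_zero (M : ℕ) (q : ℝ) (n : ℕ) :
    ∑ t : Fin M → Bool, nodeWeight q t * chainWeight (nodeWeight q) (linkKernel fun _ => 0) n t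
      = (1 - (n : ℝ) * q ^ 2 + Ppoly q (n + 1)) ^ M := by
  have h : chainWeight (bernWeight q) avoidKernel (n + 1) false
      = ∑ b, bernWeight q b * chainWeight (bernWeight q) avoidKernel n b := by
    simp [chainWeight, avoidKernel]
  have h' := Finset.prod_univ_sum (fun _ : Fin M => (univ : Finset Bool))
    (fun _ b => bernWeight q b * chainWeight (bernWeight q) avoidKernel n b)
  rw [Fintype.piFinset_univ, ← h, chainWeight_avoid q n] at h'
  simp only [Finset.prod_const, Finset.card_univ, Fintype.card_fin] at h'
  rw [h']
  refine Finset.sum_congr rfl fun t _ => ?_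
  rw [chainWeight_zero_eq_prod, nodeWeight, Finset.prod_mul_distrib]

lemma hcoef_succ (M : ℕ) (q : ℝ) (x : ℕ → ℝ) (n : ℕ) :
    hcoef M q x (n + 1) = x (n + 1) * ∑ r ∈ Finset.range (n + 1),
      (1 - ((n - r : ℕ) : ℝ) * q ^ 2 + Ppoly q (n - r + 1)) ^ M * hcoef M q x r
        * ∏ l ∈ Finset.Icc (r + 1) n, ((1 - x l) - x l) := by
  rcases n with _ | n
  · simp [hcoef, Ppoly]
  · rw [hcoef, Finset.sum_attach (Finset.range (n + 2)) fun r =>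
      (1 - ((n : ℝ) + 1 - (r : ℝ)) * q ^ 2 + Ppoly q (n + 2 - r)) ^ M
          * hcoef M q x r * ∏ l ∈ Finset.Icc (r + 1) (n + 1), ((1 - x l) - x l)]
    congr 1
    refine Finset.sum_congr rfl fun r hr => ?_
    have hr' : r ≤ n + 1 := Nat.lt_succ_iff.mp (Finset.mem_range.mp hr)
    rw [Nat.cast_sub hr', show n + 2 - r = n + 1 - r + 1 by omega]
    push_cast
    rfl

lemma linkKernel_eq {M : ℕ} {x : ℕ → ℝ} {j : ℕ} (hx : x (j + 1) = 0 ∨ x (j + 1) = 1)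
    (i : ℕ) (t s : Fin M → Bool) :
    linkKernel x j t s = x (j + 1)
      + ((1 - x (j + 1)) - x (j + 1)) * linkKernel (fun _ => 0) i t s := by
  unfold linkKernel
  rcases hx with h | h <;> by_cases h' : ∃ k, t k = true ∧ s k = true <;> simp [h, h']

lemma chainWeight_expansion (M : ℕ) (q : ℝ) (x : ℕ → ℝ) (n : ℕ)
    (hx : ∀ j, 1 ≤ j → j ≤ n → (x j = 0 ∨ x j = 1)) (s : Fin M → Bool) :
    chainWeight (nodeWeight q) (linkKernel x) n s
      = ∑ j ∈ Finset.range (n + 1), hcoef M q x j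
          * chainWeight (nodeWeight q) (linkKernel fun _ => 0) (n - j) s
          * ∏ l ∈ Finset.Icc (j + 1) n, ((1 - x l) - x l) := by
  induction n generalizing s with
  | zero => simp [chainWeight, hcoef]
  | succ n ih =>
    have ih' := ih fun j h1 h2 => hx j h1 (h2.trans n.le_succ)
    rw [Finset.sum_range_succ, hcoef_succ]
    simp only [chainWeight, ih', Nat.sub_self, mul_one, Finset.mul_sum]
    rw [Finset.sum_comm, Finset.Icc_eq_empty (by omega), Finset.prod_empty, mul_one,
      ← Finset.sum_add_distrib]
    refine Finset.sum_congr rfl fun j hj => ?_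
    have hj' : j ≤ n := Nat.lt_succ_iff.mp (Finset.mem_range.mp hj)
    rw [← sum_chainWeight_zero, Nat.succ_sub hj', chainWeight,
      Finset.prod_Icc_succ_top (by omega)]
    simp only [Finset.mul_sum, Finset.sum_mul]
    rw [← Finset.sum_add_distrib]
    refine Finset.sum_congr rfl fun t _ => ?_
    rw [linkKernel_eq (hx (n + 1) (by omega) le_rfl) (n - j)]
    ring

lemma Q0c_eq_chainWeight {M : ℕ} {q : ℝ} (h0 : 0 < q) (h1 : q < 1) (A : Finset (Fin M)) (k : ℕ) :
    Q0c M q A k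
      = chainWeight (nodeWeight q) (linkKernel fun _ => 0) k (fun k => decide (k ∈ A)) := by
  cases k with
  | zero => rfl
  | succ k => exact Qcond_eq_chainWeight h0 h1 _ A

/-- `Q_{x^{(n)}}(m) = ∑_{j=0}^n h_j Q_{0^{(n−j)}}(m) ∏_{l=j+1}^n ((1−x_l)−x_l)`. -/
theorem stmt6 (M n : ℕ) (hM : 1 ≤ M) (hn : 1 ≤ n) (q : ℝ) (hq : q ∈ Set.Ioo (0 : ℝ) 1)
    (x : ℕ → ℝ) (hx : ∀ j, 1 ≤ j → j ≤ n → (x j = 0 ∨ x j = 1))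
    (m : ℕ) (hm : m ≤ M) (A : Finset (Fin M)) (hA : A.card = m) :
    Qcond M n q x A
      = ∑ j ∈ Finset.range (n + 1),
          hcoef M q x j * Q0c M q A (n - j) *
            ∏ l ∈ Finset.Icc (j + 1) n, ((1 - x l) - x l) := by
  simp only [Qcond_eq_chainWeight hq.1 hq.2, Q0c_eq_chainWeight hq.1 hq.2]
  exact chainWeight_expansion M q x n hx _
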